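/- With the same RIFS setup and a doubling gauge $G$: if $\sup_{u \in \Omega} \mathcal{P}^G(F_u) = \infty$, then the set $\{\omega \in \Omega : \mathcal{P}^G(F_\omega) = \infty\}$ is residual in $(\Omega, d_\Omega)$. -/

import Mathlib

open Metric MeasureTheory Filter Set
open scoped ENNReal NNReal

/-- A gauge function: continuous, monotone increasing and positive on `(0,∞)`,
with `G(t) → 0` as `t → 0⁺`. -/
def IsGauge (G : ℝ → ℝ) : Prop :=
  ContinuousOn G (Set.Ioi 0) ∧ MonotoneOn G (Set.Ioi 0) ∧ (∀ t, 0 < t → 0 < G t) ∧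
    Filter.Tendsto G (nhdsWithin 0 (Set.Ioi 0)) (nhds 0)

def gaugeRatioSet (G : ℝ → ℝ) (c : ℝ) : Set ℝ := {r | ∃ t, 0 < t ∧ r = G (c * t) / G t}

/-- `D⁻(G,c) = inf_{t>0} G(ct)/G(t)`. -/
noncomputable def Dminus (G : ℝ → ℝ) (c : ℝ) : ℝ := sInf (gaugeRatioSet G c)

/-- `D⁺(G,c) = sup_{t>0} G(ct)/G(t)`. -/
noncomputable def Dplus (G : ℝ → ℝ) (c : ℝ) : ℝ := sSup (gaugeRatioSet G c)

/-- `G` is doubling: for some `c > 0`, `0 < D⁻(G,c)` and `D⁺(G,c) < ∞`. -/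
def DoublingGauge (G : ℝ → ℝ) : Prop :=
  ∃ c, 0 < c ∧ 0 < Dminus G c ∧ BddAbove (gaugeRatioSet G c)

/-- Packing pre-measure with respect to the gauge `G` (applied to the diameters `2r`
of the balls of a countable centred `δ`-packing), as `δ → 0`. -/
noncomputable def packingPre {K : Type*} [MetricSpace K] (G : ℝ → ℝ) (F : Set K) : ℝ≥0∞ :=
  ⨅ (δ : ℝ) (_ : 0 < δ),
    ⨆ (s : Set ℕ) (c : ℕ → K) (r : ℕ → ℝ)
      (_ : ∀ n ∈ s, c n ∈ F ∧ 0 < r n ∧ 2 * r n ≤ δ)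
      (_ : s.PairwiseDisjoint fun n => Metric.closedBall (c n) (r n)),
      ∑' n : s, ENNReal.ofReal (G (2 * r n))

/-- Packing measure with respect to the gauge `G`. -/
noncomputable def packingMeasure {K : Type*} [MetricSpace K] (G : ℝ → ℝ) (F : Set K) : ℝ≥0∞ :=
  ⨅ (E : ℕ → Set K) (_ : F ⊆ ⋃ n, E n), ∑' n, packingPre G (E n)

/-- Packing dimension, defined from the packing measures `𝒫^s`. -/
noncomputable def packingDim {K : Type*} [MetricSpace K] (F : Set K) : ℝ≥0∞ :=
  ⨆ (s : ℝ) (_ : 0 ≤ s) (_ : packingMeasure (fun t => t ^ s) F = ⊤), ENNReal.ofReal s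

/-- The level-`k` approximation of the random attractor: the union over all length-`k`
words `(i₁,…,i_k)` with `i_l ∈ 𝓘_{ω_l}` of `S_{ω₁,i₁} ∘ ⋯ ∘ S_{ω_k,i_k}(K₀)`. -/
def levelSets {X : Type*} {N : ℕ} (m : Fin N → ℕ) (S : ∀ i, Fin (m i) → X → X) (K₀ : Set X) :
    (ℕ → Fin N) → ℕ → Set X
  | _, 0 => K₀
  | ω, k+1 => ⋃ j : Fin (m (ω 0)), S (ω 0) j '' levelSets m S K₀ (fun n => ω (n+1)) k

/-- The random attractor `F_ω = ⋂_k ⋃_{i₁,…,i_k} S_{ω₁,i₁} ∘ ⋯ ∘ S_{ω_k,i_k}(K₀)`. -/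
def attractorOf {X : Type*} {N : ℕ} (m : Fin N → ℕ) (S : ∀ i, Fin (m i) → X → X)
    (K₀ : Set X) (ω : ℕ → Fin N) : Set X :=
  ⋂ k, levelSets m S K₀ ω k

/-- `φ` is a bi-Lipschitz contraction. -/
def IsBiLipContraction {K : Type*} [MetricSpace K] (φ : K → K) : Prop :=
  ∃ c C : ℝ, 0 < c ∧ C < 1 ∧
    ∀ x y, c * dist x y ≤ dist (φ x) (φ y) ∧ dist (φ x) (φ y) ≤ C * dist x y


/-- Supremum of the gauge sums over the countable centred `δ`-packings of `F`. -/
noncomputable def packingSup {K : Type*} [MetricSpace K] (G : ℝ → ℝ) (δ : ℝ) (F : Set K) : ℝ≥0∞ :=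
  ⨆ (s : Set ℕ) (c : ℕ → K) (r : ℕ → ℝ)
      (_ : ∀ n ∈ s, c n ∈ F ∧ 0 < r n ∧ 2 * r n ≤ δ)
      (_ : s.PairwiseDisjoint fun n => Metric.closedBall (c n) (r n)),
      ∑' n : s, ENNReal.ofReal (G (2 * r n))

section Packing

variable {K : Type*} [MetricSpace K] {G : ℝ → ℝ} {δ : ℝ} {E F : Set K}

lemma packingPre_eq_iInf_packingSup :
    packingPre G F = ⨅ (δ : ℝ) (_ : 0 < δ), packingSup G δ F := rfl

lemma le_packingSup {s : Set ℕ} {c : ℕ → K} {r : ℕ → ℝ}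
    (h : ∀ n ∈ s, c n ∈ F ∧ 0 < r n ∧ 2 * r n ≤ δ)
    (hd : s.PairwiseDisjoint fun n => Metric.closedBall (c n) (r n)) :
    ∑' n : s, ENNReal.ofReal (G (2 * r n)) ≤ packingSup G δ F :=
  le_iSup_of_le s <| le_iSup_of_le c <| le_iSup_of_le r <| le_iSup_of_le h <|
    le_iSup_of_le hd le_rfl

lemma packingSup_le {M : ℝ≥0∞}
    (H : ∀ (s : Set ℕ) (c : ℕ → K) (r : ℕ → ℝ),
      (∀ n ∈ s, c n ∈ F ∧ 0 < r n ∧ 2 * r n ≤ δ) →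
      (s.PairwiseDisjoint fun n => Metric.closedBall (c n) (r n)) →
      ∑' n : s, ENNReal.ofReal (G (2 * r n)) ≤ M) :
    packingSup G δ F ≤ M :=
  iSup_le fun s => iSup_le fun c => iSup_le fun r => iSup_le fun h => iSup_le fun hd =>
    H s c r h hd

lemma packingSup_mono (hEF : E ⊆ F) : packingSup G δ E ≤ packingSup G δ F :=
  packingSup_le fun _ _ _ h hd =>
    le_packingSup (fun n hn => ⟨hEF (h n hn).1, (h n hn).2⟩) hd

lemma packingSup_mono_delta {δ' : ℝ} (hδ : δ ≤ δ') : packingSup G δ F ≤ packingSup G δ' F :=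
  packingSup_le fun _ _ _ h hd =>
    le_packingSup (fun n hn => ⟨(h n hn).1, (h n hn).2.1, (h n hn).2.2.trans hδ⟩) hd

lemma packingPre_mono (hEF : E ⊆ F) : packingPre G E ≤ packingPre G F :=
  iInf₂_mono fun _ _ => packingSup_mono hEF

lemma packingPre_empty : packingPre G (∅ : Set K) = 0 := by
  refine le_antisymm ((iInf₂_le (1 : ℝ) one_pos).trans ?_) bot_le
  refine packingSup_le fun s c r h _ => ?_
  obtain rfl : s = ∅ := Set.eq_empty_of_forall_notMem fun n hn => (h n hn).1
  simp

lemma packingMeasure_eq_ofFunction :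
    packingMeasure G F = OuterMeasure.ofFunction (packingPre G) packingPre_empty F := by
  rw [OuterMeasure.ofFunction_apply]
  rfl

lemma packingMeasure_le_packingPre : packingMeasure G F ≤ packingPre G F := by
  rw [packingMeasure_eq_ofFunction]
  exact OuterMeasure.ofFunction_le F

lemma packingMeasure_le_sum {ι : Type*} [Fintype ι] {A : ι → Set K} (h : F ⊆ ⋃ i, A i) :
    packingMeasure G F ≤ ∑ i, packingMeasure G (A i) := by
  simp only [packingMeasure_eq_ofFunction]
  exact (measure_mono h).trans (measure_iUnion_fintype_le _ _)

/-- If `g` separates points at least twice as much as `f` does, then the packing sums of `g '' E`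
are at least those of `f '' E`, whatever the gauge. -/
lemma packingSup_image_le_of_expanding {f g : K → K}
    (hfg : ∀ x y, 2 * dist (f x) (f y) ≤ dist (g x) (g y)) :
    packingSup G δ (f '' E) ≤ packingSup G δ (g '' E) := by
  refine packingSup_le fun s c r h hd => ?_
  have hx : ∀ n, ∃ x, n ∈ s → x ∈ E ∧ f x = c n := by
    intro n
    by_cases hn : n ∈ s
    · obtain ⟨x, hxE, hx⟩ := (h n hn).1
      exact ⟨x, fun _ => ⟨hxE, hx⟩⟩
    · exact ⟨c n, fun h' => absurd h' hn⟩
  choose x hx using hx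
  refine le_packingSup (c := fun n => g (x n))
    (fun n hn => ⟨Set.mem_image_of_mem g (hx n hn).1, (h n hn).2⟩) ?_
  intro i hi j hj hij
  have hdis := hd hi hj hij
  have h1 : r i < dist (c i) (c j) := by
    by_contra! hle
    have hmem : c j ∈ closedBall (c i) (r i) := by rwa [mem_closedBall, dist_comm]
    exact Set.disjoint_left.1 hdis hmem (mem_closedBall_self (h j hj).2.1.le)
  have h2 : r j < dist (c i) (c j) := by
    by_contra! hle
    exact Set.disjoint_left.1 hdis (mem_closedBall_self (h i hi).2.1.le)
      (mem_closedBall.2 hle)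
  have h3 := hfg (x i) (x j)
  rw [(hx i hi).2, (hx j hj).2] at h3
  exact closedBall_disjoint_closedBall (by linarith)

lemma exists_pos_of_disjoint_closedBall [CompactSpace K] {x y : K} {r s : ℝ}
    (h : Disjoint (closedBall x r) (closedBall y s)) :
    ∃ ε > 0, ∀ x' y', dist x' x < ε → dist y' y < ε →
      Disjoint (closedBall x' r) (closedBall y' s) := by
  have hc : Continuous fun z => max (dist z x - r) (dist z y - s) := by fun_prop
  obtain ⟨z₀, -, hz₀⟩ := isCompact_univ.exists_isMinOn ⟨x, mem_univ x⟩ hc.continuousOn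
  refine ⟨max (dist z₀ x - r) (dist z₀ y - s), ?_, fun x' y' hx' hy' => ?_⟩
  · by_contra! hle
    obtain ⟨h1, h2⟩ := max_le_iff.1 hle
    exact Set.disjoint_left.1 h (mem_closedBall.2 (sub_nonpos.1 h1))
      (mem_closedBall.2 (sub_nonpos.1 h2))
  · refine Set.disjoint_left.2 fun z hz1 hz2 => ?_
    have hz := isMinOn_iff.1 hz₀ z (mem_univ z)
    rw [mem_closedBall] at hz1 hz2
    have h1 := dist_triangle z x' x
    have h2 := dist_triangle z y' y
    rcases le_max_iff.1 hz with h3 | h3 <;> linarith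

/-- Packing sums are lower semicontinuous under one-sided Hausdorff perturbations. -/
lemma exists_pos_lt_packingSup [CompactSpace K] {M : ℝ≥0∞} (hM : M < packingSup G δ F) :
    ∃ ε > 0, ∀ E : Set K, (∀ x ∈ F, ∃ y ∈ E, dist y x < ε) → M < packingSup G δ E := by
  simp only [packingSup, lt_iSup_iff] at hM
  obtain ⟨s, c, r, h, hd, hlt⟩ := hM
  rw [ENNReal.tsum_eq_iSup_sum, lt_iSup_iff] at hlt
  obtain ⟨t, ht⟩ := hlt
  have hpair : ∀ p : t × t, ∃ ε > 0, p.1 ≠ p.2 → ∀ x' y', dist x' (c p.1) < ε →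
      dist y' (c p.2) < ε → Disjoint (closedBall x' (r p.1)) (closedBall y' (r p.2)) := by
    intro p
    by_cases hp : p.1 = p.2
    · exact ⟨1, one_pos, fun h' => absurd hp h'⟩
    · have hne : ((p.1 : s) : ℕ) ≠ (p.2 : s) := fun h' => hp (Subtype.ext (Subtype.ext h'))
      obtain ⟨ε, hε, H⟩ := exists_pos_of_disjoint_closedBall (hd p.1.1.2 p.2.1.2 hne)
      exact ⟨ε, hε, fun _ => H⟩
  choose e he hdisj using hpair
  obtain ⟨ε, hε, hεe⟩ : ∃ ε > 0, ∀ p, ε ≤ e p := by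
    rcases isEmpty_or_nonempty (t × t) with h' | h'
    · exact ⟨1, one_pos, fun p => isEmptyElim p⟩
    · obtain ⟨p, hp⟩ := Finite.exists_min e
      exact ⟨e p, he p, hp⟩
  refine ⟨ε, hε, fun E hE => ht.trans_le ?_⟩
  have hy : ∀ n, ∃ y, n ∈ s → y ∈ E ∧ dist y (c n) < ε := by
    intro n
    by_cases hn : n ∈ s
    · obtain ⟨y, hyE, hy⟩ := hE _ (h n hn).1
      exact ⟨y, fun _ => ⟨hyE, hy⟩⟩
    · exact ⟨c n, fun h' => absurd h' hn⟩
  choose y hy using hy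
  let t' : Finset ℕ := t.map (Function.Embedding.subtype _)
  have ht' : ∀ n, n ∈ (t' : Set ℕ) → ∃ hn : n ∈ s, (⟨n, hn⟩ : s) ∈ t := by
    intro n hn
    simpa [t'] using hn
  calc ∑ n ∈ t, ENNReal.ofReal (G (2 * r n))
      = ∑' n : (t' : Set ℕ), ENNReal.ofReal (G (2 * r n)) := by
        rw [Finset.tsum_subtype' t' fun n => ENNReal.ofReal (G (2 * r n)), Finset.sum_map]
        rfl
    _ ≤ packingSup G δ E := by
        refine le_packingSup (c := y) (fun n hn => ?_) fun i hi j hj hij => ?_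
        · obtain ⟨hs, -⟩ := ht' n hn
          exact ⟨(hy n hs).1, (h n hs).2⟩
        · obtain ⟨his, hit⟩ := ht' i hi
          obtain ⟨hjs, hjt⟩ := ht' j hj
          exact hdisj (⟨_, hit⟩, ⟨_, hjt⟩) (fun h' => hij (by simpa using h')) _ _
            ((hy i his).2.trans_le (hεe _)) ((hy j hjs).2.trans_le (hεe _))

lemma packingPre_closure_le [CompactSpace K] : packingPre G (closure E) ≤ packingPre G E := by
  refine iInf₂_mono fun δ _ => le_of_forall_lt fun M hM => ?_
  obtain ⟨ε, hε, H⟩ := exists_pos_lt_packingSup (G := G) (δ := δ) hM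
  refine H E fun x hx => ?_
  obtain ⟨y, hyE, hy⟩ := Metric.mem_closure_iff.1 hx ε hε
  exact ⟨y, hyE, by rwa [dist_comm]⟩

lemma packingPre_eq_top
    (h : ∀ n M : ℕ, (M : ℝ≥0∞) < packingSup G (1 / ((n : ℝ) + 1)) F) : packingPre G F = ⊤ := by
  simp only [packingPre_eq_iInf_packingSup, iInf_eq_top]
  intro δ hδ
  obtain ⟨n, hn⟩ := exists_nat_one_div_lt hδ
  refine top_unique ?_
  refine le_of_forall_lt fun M hM => ?_
  obtain ⟨k, hk⟩ := ENNReal.exists_nat_gt hM.ne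
  exact hk.trans ((h n k).trans_le (packingSup_mono_delta hn.le))

end Packing

section Words

variable {X : Type*} {N : ℕ} {m : Fin N → ℕ} {S : ∀ i, Fin (m i) → X → X}

/-- The composition of the maps spelled out by a finite word. -/
def wordMap (S : ∀ i, Fin (m i) → X → X) : List (Σ i, Fin (m i)) → X → X
  | [] => id
  | p :: a => S p.1 p.2 ∘ wordMap S a

/-- The first indices of the letters of the word are an initial segment of `ω`. -/
def IsAdmissible : List (Σ i, Fin (m i)) → (ℕ → Fin N) → Prop
  | [], _ => True
  | p :: a, ω => p.1 = ω 0 ∧ IsAdmissible a fun n => ω (n + 1)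

lemma IsAdmissible.congr {a : List (Σ i, Fin (m i))} {ω ω' : ℕ → Fin N} (h : IsAdmissible a ω)
    (hω : ∀ i < a.length, ω' i = ω i) : IsAdmissible a ω' := by
  induction a generalizing ω ω' with
  | nil => trivial
  | cons p a ih =>
    refine ⟨h.1.trans (hω 0 (by simp)).symm, ih h.2 fun i hi => hω (i + 1) ?_⟩
    simpa using hi

lemma levelSets_antitone (ω : ℕ → Fin N) : Antitone (levelSets m S Set.univ ω) := by
  refine antitone_nat_of_succ_le fun k => ?_
  induction k generalizing ω with
  | zero => exact Set.subset_univ _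
  | succ k ih => exact Set.iUnion_mono fun j => Set.image_mono (ih _)

lemma image_attractorOf_subset (ω : ℕ → Fin N) (j : Fin (m (ω 0))) :
    S (ω 0) j '' attractorOf m S Set.univ (fun n => ω (n + 1)) ⊆
      attractorOf m S Set.univ ω := by
  rintro _ ⟨x, hx, rfl⟩
  refine Set.mem_iInter.2 fun k => ?_
  cases k with
  | zero => trivial
  | succ k => exact Set.mem_iUnion.2 ⟨j, _, Set.mem_iInter.1 hx k, rfl⟩

lemma exists_mem_image_attractorOf (hS : ∀ i j, Function.Injective (S i j)) {ω : ℕ → Fin N} {x : X}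
    (hx : x ∈ attractorOf m S Set.univ ω) :
    ∃ j, x ∈ S (ω 0) j '' attractorOf m S Set.univ fun n => ω (n + 1) := by
  have hj : ∀ k, ∃ j, x ∈ S (ω 0) j '' levelSets m S Set.univ (fun n => ω (n + 1)) k :=
    fun k => Set.mem_iUnion.1 (Set.mem_iInter.1 hx (k + 1))
  choose j hj using hj
  obtain ⟨j₀, hj₀⟩ := Finite.exists_infinite_fiber j
  rw [Set.infinite_coe_iff] at hj₀
  obtain ⟨k₀, hk₀ : j k₀ = j₀⟩ := hj₀.nonempty
  obtain ⟨y, -, hy⟩ := hk₀ ▸ hj k₀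
  refine ⟨j₀, y, Set.mem_iInter.2 fun k => ?_, hy⟩
  obtain ⟨l, hl : j l = j₀, hkl⟩ := hj₀.exists_gt k
  obtain ⟨z, hz, hzx⟩ := hl ▸ hj l
  obtain rfl : z = y := hS _ _ (hzx.trans hy.symm)
  exact levelSets_antitone _ hkl.le hz

lemma IsAdmissible.image_subset {a : List (Σ i, Fin (m i))} {ω : ℕ → Fin N}
    (h : IsAdmissible a ω) :
    wordMap S a '' attractorOf m S Set.univ (fun n => ω (n + a.length)) ⊆
      attractorOf m S Set.univ ω := by
  induction a generalizing ω with
  | nil => simp [wordMap]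
  | cons p a ih =>
    obtain ⟨i, j⟩ := p
    obtain ⟨rfl, h⟩ := h
    rw [wordMap, Set.image_comp]
    refine (Set.image_mono ?_).trans (image_attractorOf_subset ω j)
    have := ih h
    simpa [add_assoc, add_comm, add_left_comm] using this

lemma exists_admissible_mem_image (hS : ∀ i j, Function.Injective (S i j)) (k : ℕ)
    {ω : ℕ → Fin N} {x : X} (hx : x ∈ attractorOf m S Set.univ ω) :
    ∃ a : List (Σ i, Fin (m i)), a.length = k ∧ IsAdmissible a ω ∧
      x ∈ wordMap S a '' attractorOf m S Set.univ fun n => ω (n + k) := by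
  induction k generalizing ω x with
  | zero => exact ⟨[], rfl, trivial, x, hx, rfl⟩
  | succ k ih =>
    obtain ⟨j, y, hy, rfl⟩ := exists_mem_image_attractorOf hS hx
    obtain ⟨a, ha, hadm, z, hz, rfl⟩ := ih hy
    exact ⟨⟨ω 0, j⟩ :: a, by simp [ha], ⟨rfl, hadm⟩, z,
      by simpa [add_assoc, add_comm, add_left_comm] using hz, rfl⟩

end Words

section Contractions

variable {K : Type*} [MetricSpace K] {N : ℕ} {m : Fin N → ℕ} {S : ∀ i, Fin (m i) → K → K}

lemma IsBiLipContraction.injective {φ : K → K} (h : IsBiLipContraction φ) :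
    Function.Injective φ := by
  obtain ⟨c, C, hc, -, H⟩ := h
  intro x y hxy
  have h1 := (H x y).1
  rw [hxy, dist_self] at h1
  exact dist_le_zero.1 (nonpos_of_mul_nonpos_right h1 hc)

lemma IsBiLipContraction.continuous {φ : K → K} (h : IsBiLipContraction φ) : Continuous φ := by
  obtain ⟨c, C, -, -, H⟩ := h
  refine (LipschitzWith.of_dist_le_mul (K := C.toNNReal) fun x y => (H x y).2.trans ?_).continuous
  exact mul_le_mul_of_nonneg_right (Real.le_coe_toNNReal C) dist_nonneg

lemma exists_wordMap_lower (hS : ∀ i j, IsBiLipContraction (S i j)) (a : List (Σ i, Fin (m i))) :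
    ∃ c > 0, ∀ x y, c * dist x y ≤ dist (wordMap S a x) (wordMap S a y) := by
  induction a with
  | nil => exact ⟨1, one_pos, by simp [wordMap]⟩
  | cons p a ih =>
    obtain ⟨c, hc, H⟩ := ih
    obtain ⟨d, _, hd, -, H'⟩ := hS p.1 p.2
    refine ⟨d * c, mul_pos hd hc, fun x y => ?_⟩
    rw [mul_assoc]
    exact (mul_le_mul_of_nonneg_left (H x y) hd.le).trans (H' _ _).1

lemma exists_uniform_ratio (hS : ∀ i j, IsBiLipContraction (S i j)) :
    ∃ C : ℝ, 0 ≤ C ∧ C < 1 ∧ ∀ i j x y, dist (S i j x) (S i j y) ≤ C * dist x y := by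
  choose c C _ hC H using fun p : Σ i, Fin (m i) => hS p.1 p.2
  obtain ⟨D, hD⟩ : ∃ D : ℝ, 0 ≤ D ∧ D < 1 ∧ ∀ p, C p ≤ D := by
    rcases isEmpty_or_nonempty (Σ i, Fin (m i)) with h | h
    · exact ⟨0, le_rfl, one_pos, fun p => isEmptyElim p⟩
    · obtain ⟨p, hp⟩ := Finite.exists_max C
      exact ⟨max 0 (C p), le_max_left _ _, max_lt one_pos (hC p),
        fun q => (hp q).trans (le_max_right _ _)⟩
  exact ⟨D, hD.1, hD.2.1, fun i j x y => (H ⟨i, j⟩ x y).2.trans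
    (mul_le_mul_of_nonneg_right (hD.2.2 ⟨i, j⟩) dist_nonneg)⟩

lemma dist_wordMap_le {C : ℝ} (hC : 0 ≤ C)
    (hS : ∀ i j x y, dist (S i j x) (S i j y) ≤ C * dist x y) (a : List (Σ i, Fin (m i)))
    (x y : K) : dist (wordMap S a x) (wordMap S a y) ≤ C ^ a.length * dist x y := by
  induction a with
  | nil => simp [wordMap]
  | cons p a ih =>
    refine (hS p.1 p.2 _ _).trans ?_
    rw [List.length_cons, pow_succ', mul_assoc]
    exact mul_le_mul_of_nonneg_left ih hC

variable [CompactSpace K]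

lemma isCompact_levelSets (hS : ∀ i j, Continuous (S i j)) (ω : ℕ → Fin N) (k : ℕ) :
    IsCompact (levelSets m S Set.univ ω k) := by
  induction k generalizing ω with
  | zero => exact isCompact_univ
  | succ k ih => exact isCompact_iUnion fun j => (ih _).image (hS _ _)

lemma isClosed_attractorOf (hS : ∀ i j, Continuous (S i j)) (ω : ℕ → Fin N) :
    IsClosed (attractorOf m S Set.univ ω) :=
  isClosed_iInter fun k => (isCompact_levelSets hS ω k).isClosed

lemma attractorOf_nonempty [Nonempty K] (hm : ∀ i, 0 < m i) (hS : ∀ i j, Continuous (S i j))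
    (ω : ℕ → Fin N) : (attractorOf m S Set.univ ω).Nonempty := by
  refine IsCompact.nonempty_iInter_of_sequence_nonempty_isCompact_isClosed _
    (fun k => levelSets_antitone ω k.le_succ) (fun k => ?_) (isCompact_levelSets hS ω 0)
    fun k => (isCompact_levelSets hS ω k).isClosed
  induction k generalizing ω with
  | zero => exact Set.univ_nonempty
  | succ k ih => exact Set.nonempty_iUnion.2 ⟨⟨0, hm _⟩, (ih _).image _⟩

end Contractions

section Residual

variable {K : Type*} [MetricSpace K] {N : ℕ} {m : Fin N → ℕ}
  {S : ∀ i, Fin (m i) → K → K} {G : ℝ → ℝ} {δ : ℝ}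

lemma exists_nat_pow_mul_lt {C B ε : ℝ} (hC0 : 0 ≤ C) (hC : C < 1) (hε : 0 < ε) :
    ∃ k : ℕ, C ^ k * B < ε := by
  have h := (tendsto_pow_atTop_nhds_zero_of_lt_one hC0 hC).mul_const B
  rw [zero_mul] at h
  exact (h.eventually_lt_const hε).exists

lemma exists_wordMap_image_packingMeasure_gt (hS : ∀ i j, IsBiLipContraction (S i j))
    (h0 : (⨆ u : ℕ → Fin N, packingMeasure G (attractorOf m S Set.univ u)) = ⊤)
    (k M : ℕ) :
    ∃ (v : List (Σ i, Fin (m i))) (u : ℕ → Fin N), v.length = k ∧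
      (M : ℝ≥0∞) < packingMeasure G (wordMap S v '' attractorOf m S Set.univ u) := by
  by_contra! H
  have hle : (⨆ u : ℕ → Fin N, packingMeasure G (attractorOf m S Set.univ u)) ≤
      ∑ _v : List.Vector (Σ i, Fin (m i)) k, (M : ℝ≥0∞) := by
    refine iSup_le fun u => ?_
    refine (packingMeasure_le_sum (A := fun v : List.Vector (Σ i, Fin (m i)) k =>
      wordMap S v.1 '' attractorOf m S Set.univ fun n => u (n + k)) fun x hx => ?_).trans
      (Finset.sum_le_sum fun v _ => H v.1 _ v.2)
    obtain ⟨a, ha, -, hxa⟩ :=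
      exists_admissible_mem_image (fun i j => (hS i j).injective) k hx
    exact Set.mem_iUnion.2 ⟨⟨a, ha⟩, hxa⟩
  rw [h0, top_le_iff] at hle
  exact ENNReal.sum_ne_top.2 (fun _ _ => ENNReal.natCast_ne_top M) hle

/-- Every finite word carries an image of some attractor with large packing sums; no regularity of
the gauge is needed, since long words contract more than a given word does. -/
lemma exists_lt_packingSup_wordMap_image (hS : ∀ i j, IsBiLipContraction (S i j))
    (h0 : (⨆ u : ℕ → Fin N, packingMeasure G (attractorOf m S Set.univ u)) = ⊤)
    (hδ : 0 < δ) (f : K → K) {c : ℝ} (hc : 0 < c) (hf : ∀ x y, c * dist x y ≤ dist (f x) (f y))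
    (M : ℕ) :
    ∃ u : ℕ → Fin N, (M : ℝ≥0∞) < packingSup G δ (f '' attractorOf m S Set.univ u) := by
  obtain ⟨C, hC0, hC1, hC⟩ := exists_uniform_ratio hS
  obtain ⟨k, hk⟩ := exists_nat_pow_mul_lt (B := 2) hC0 hC1 hc
  obtain ⟨v, u, rfl, hv⟩ := exists_wordMap_image_packingMeasure_gt hS h0 k M
  refine ⟨u, hv.trans_le (packingMeasure_le_packingPre.trans ((iInf₂_le δ hδ).trans ?_))⟩
  refine packingSup_image_le_of_expanding fun x y => le_trans ?_ (hf x y)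
  have h1 := dist_wordMap_le hC0 hC v x y
  have h2 := mul_le_mul_of_nonneg_right hk.le (dist_nonneg (x := x) (y := y))
  linarith

variable [CompactSpace K]

/-- Cylinders of large order around `ω` have attractors almost containing that of `ω`. -/
lemma exists_attractorOf_near [Nonempty K] (hm : ∀ i, 0 < m i)
    (hS : ∀ i j, IsBiLipContraction (S i j)) {ε : ℝ} (hε : 0 < ε) :
    ∃ k : ℕ, ∀ ω ω' : ℕ → Fin N, (∀ i < k, ω' i = ω i) →
      ∀ x ∈ attractorOf m S Set.univ ω, ∃ y ∈ attractorOf m S Set.univ ω', dist y x < ε := by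
  obtain ⟨C, hC0, hC1, hC⟩ := exists_uniform_ratio hS
  obtain ⟨k, hk⟩ := exists_nat_pow_mul_lt (B := diam (Set.univ : Set K)) hC0 hC1 hε
  refine ⟨k, fun ω ω' hω x hx => ?_⟩
  obtain ⟨a, rfl, ha, z, -, rfl⟩ :=
    exists_admissible_mem_image (fun i j => (hS i j).injective) k hx
  obtain ⟨z', hz'⟩ := attractorOf_nonempty hm (fun i j => (hS i j).continuous)
    fun n => ω' (n + a.length)
  refine ⟨wordMap S a z', (ha.congr hω).image_subset ⟨z', hz', rfl⟩, ?_⟩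
  refine ((dist_wordMap_le hC0 hC a z' z).trans ?_).trans_lt hk
  exact mul_le_mul_of_nonneg_left
    (dist_le_diam_of_mem isCompact_univ.isBounded (mem_univ _) (mem_univ _)) (by positivity)

lemma isOpen_setOf_lt_packingSup [Nonempty K] (hm : ∀ i, 0 < m i)
    (hS : ∀ i j, IsBiLipContraction (S i j)) (a : List (Σ i, Fin (m i))) (M : ℝ≥0∞) :
    IsOpen {ω : ℕ → Fin N | IsAdmissible a ω →
      M < packingSup G δ (wordMap S a '' attractorOf m S Set.univ fun n => ω (n + a.length))} := by
  refine (PiNat.isTopologicalBasis_cylinders fun _ => Fin N).isOpen_iff.2 fun ω hω => ?_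
  by_cases ha : IsAdmissible a ω
  · obtain ⟨ε, hε, H⟩ := exists_pos_lt_packingSup (hω ha)
    obtain ⟨C, hC0, hC1, hC⟩ := exists_uniform_ratio hS
    obtain ⟨k, hk⟩ := exists_attractorOf_near hm hS hε
    refine ⟨_, ⟨ω, a.length + k, rfl⟩, PiNat.self_mem_cylinder _ _, fun ω' hω' _ => H _ ?_⟩
    rw [PiNat.mem_cylinder_iff] at hω'
    rintro _ ⟨x, hx, rfl⟩
    obtain ⟨y, hy, hyx⟩ := hk _ (fun n => ω' (n + a.length))
      (fun i hi => hω' _ (by omega)) x hx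
    refine ⟨_, ⟨y, hy, rfl⟩, ((dist_wordMap_le hC0 hC a y x).trans ?_).trans_lt hyx⟩
    exact mul_le_of_le_one_left dist_nonneg (pow_le_one₀ hC0 hC1.le)
  · refine ⟨_, ⟨ω, a.length, rfl⟩, PiNat.self_mem_cylinder _ _, fun ω' hω' ha' => ?_⟩
    rw [PiNat.mem_cylinder_iff] at hω'
    exact absurd (ha'.congr fun i hi => (hω' i hi).symm) ha

lemma dense_setOf_lt_packingSup [Nonempty K] (hm : ∀ i, 0 < m i)
    (hS : ∀ i j, IsBiLipContraction (S i j))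
    (h0 : (⨆ u : ℕ → Fin N, packingMeasure G (attractorOf m S Set.univ u)) = ⊤)
    (hδ : 0 < δ) (a : List (Σ i, Fin (m i))) (M : ℕ) :
    Dense {ω : ℕ → Fin N | IsAdmissible a ω →
      (M : ℝ≥0∞) <
        packingSup G δ (wordMap S a '' attractorOf m S Set.univ fun n => ω (n + a.length))} := by
  refine (PiNat.isTopologicalBasis_cylinders fun _ => Fin N).dense_iff.2 ?_
  rintro _ ⟨ω, k, rfl⟩ -
  obtain ⟨x, hx⟩ := attractorOf_nonempty hm (fun i j => (hS i j).continuous)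
    fun n => ω (n + a.length)
  obtain ⟨b, rfl, hb, -⟩ := exists_admissible_mem_image (fun i j => (hS i j).injective) k hx
  obtain ⟨c, hc, hca⟩ := exists_wordMap_lower hS a
  obtain ⟨d, hd, hdb⟩ := exists_wordMap_lower hS b
  obtain ⟨u, hu⟩ := exists_lt_packingSup_wordMap_image hS h0 hδ (wordMap S a ∘ wordMap S b)
    (mul_pos hc hd) (fun x y => by
      rw [mul_assoc]
      exact (mul_le_mul_of_nonneg_left (hdb x y) hc.le).trans (hca _ _)) M
  let ω' : ℕ → Fin N := fun n =>
    if n < a.length + b.length then ω n else u (n - (a.length + b.length))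
  have hω' : ∀ i < a.length + b.length, ω' i = ω i := fun i hi => if_pos hi
  refine ⟨ω', PiNat.mem_cylinder_iff.2 fun i hi => hω' i (by omega), fun _ => ?_⟩
  refine hu.trans_le (packingSup_mono ?_)
  rw [Set.image_comp]
  refine Set.image_mono ?_
  have hb' : IsAdmissible b fun n => ω' (n + a.length) :=
    hb.congr fun i hi => hω' _ (by omega)
  have hshift : (fun n => ω' (n + b.length + a.length)) = u := by
    funext n
    have h1 : ¬ n + b.length + a.length < a.length + b.length := by omega
    have h2 : n + b.length + a.length - (a.length + b.length) = n := by omega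
    simp only [ω', if_neg h1, h2]
  simpa only [hshift] using hb'.image_subset (S := S)

/-- If every piece of the attractor has infinite packing pre-measure, then the attractor has
infinite packing measure. -/
lemma packingMeasure_attractorOf_eq_top [Nonempty K] (hm : ∀ i, 0 < m i)
    (hS : ∀ i j, IsBiLipContraction (S i j)) {ω : ℕ → Fin N}
    (h : ∀ a : List (Σ i, Fin (m i)), IsAdmissible a ω →
      packingPre G (wordMap S a '' attractorOf m S Set.univ fun n => ω (n + a.length)) = ⊤) :
    packingMeasure G (attractorOf m S Set.univ ω) = ⊤ := by
  set F := attractorOf m S Set.univ ω with hF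
  have hScont := fun i j => (hS i j).continuous
  have : CompactSpace F := isCompact_iff_compactSpace.1 (isClosed_attractorOf hScont ω).isCompact
  have : Nonempty F := (attractorOf_nonempty hm hScont ω).to_subtype
  simp only [packingMeasure, iInf_eq_top]
  intro E hE
  obtain ⟨n, ⟨x, hx⟩, hxn⟩ := nonempty_interior_of_iUnion_of_closed
    (f := fun n => ((↑) : F → K) ⁻¹' closure (E n))
    (fun n => isClosed_closure.preimage continuous_subtype_val)
    (Set.eq_univ_of_forall fun y => by
      obtain ⟨n, hn⟩ := Set.mem_iUnion.1 (hE y.2)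
      exact Set.mem_iUnion.2 ⟨n, subset_closure hn⟩)
  obtain ⟨ε, hε, hball⟩ := Metric.mem_nhds_iff.1 (mem_interior_iff_mem_nhds.1 hxn)
  obtain ⟨C, hC0, hC1, hC⟩ := exists_uniform_ratio hS
  obtain ⟨k, hk⟩ := exists_nat_pow_mul_lt (B := diam (Set.univ : Set K)) hC0 hC1 hε
  obtain ⟨a, rfl, ha, z, hz, rfl⟩ :=
    exists_admissible_mem_image (fun i j => (hS i j).injective) k hx
  have hsub : wordMap S a '' attractorOf m S Set.univ (fun n => ω (n + a.length)) ⊆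
      closure (E n) := by
    rintro _ ⟨y, hy, rfl⟩
    have hyF : wordMap S a y ∈ F := ha.image_subset ⟨y, hy, rfl⟩
    refine @hball ⟨_, hyF⟩ (mem_ball.2 (lt_of_le_of_lt ?_ hk))
    refine (dist_wordMap_le hC0 hC a y z).trans (mul_le_mul_of_nonneg_left
      (dist_le_diam_of_mem isCompact_univ.isBounded (mem_univ _) (mem_univ _)) (by positivity))
  refine top_unique ?_
  calc ⊤ = packingPre G (wordMap S a '' attractorOf m S Set.univ fun n => ω (n + a.length)) :=
        (h a ha).symm
    _ ≤ packingPre G (closure (E n)) := packingPre_mono hsub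
    _ ≤ packingPre G (E n) := packingPre_closure_le
    _ ≤ ∑' n, packingPre G (E n) := ENNReal.le_tsum n

end Residual

/-- For a doubling gauge `G`, if the supremal `𝒫^G`-measure of the random attractors is
infinite, then the set of `ω` with `𝒫^G(F_ω) = ∞` is residual. -/
theorem typical_packingG_eq_top {K : Type*} [MetricSpace K] [CompactSpace K] [Nonempty K]
    {N : ℕ} (hN : 0 < N) (m : Fin N → ℕ) (hm : ∀ i, 0 < m i)
    (S : ∀ i, Fin (m i) → K → K) (hS : ∀ i j, IsBiLipContraction (S i j))
    (G : ℝ → ℝ) (hG : IsGauge G) (hdbl : DoublingGauge G)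
    (h0 : (⨆ u : ℕ → Fin N, packingMeasure G (attractorOf m S Set.univ u)) = ⊤) :
    {ω : ℕ → Fin N | packingMeasure G (attractorOf m S Set.univ ω) = ⊤} ∈
      residual (ℕ → Fin N) := by
  have hres : ∀ (a : List (Σ i, Fin (m i))) (n M : ℕ),
      ∀ᶠ ω in residual (ℕ → Fin N), IsAdmissible a ω → (M : ℝ≥0∞) <
        packingSup G (1 / ((n : ℝ) + 1))
          (wordMap S a '' attractorOf m S Set.univ fun l => ω (l + a.length)) :=
    fun a n M => residual_of_dense_open (isOpen_setOf_lt_packingSup hm hS a M)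
      (dense_setOf_lt_packingSup hm hS h0 Nat.one_div_pos_of_nat a M)
  have hall := eventually_countable_forall.2 fun a => eventually_countable_forall.2 fun n =>
    eventually_countable_forall.2 fun M => hres a n M
  filter_upwards [hall] with ω hω
  exact packingMeasure_attractorOf_eq_top hm hS fun a ha =>
    packingPre_eq_top fun n M => hω a n M ha
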